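/- arXiv:2010.08599 — 3 statements merged into one kernel-verified Lean document; each statement's English description precedes it below -/
import Mathlib

section
/- Let φ : Prop and A : Type u. The unit η_A : A → Cl_φ A is bijective if and only if the type φ → A has exactly one element (i.e., φ → A is nonempty and a subsingleton). In the terminology of the paper: a type is Cl_φ-modal if and only if it is Op_φ-connected. -/
/-!
If `φ` holds, every point of the pushout `Cl φ A` is glued to the point coming from `φ`, so `Cl φ A`
is a singleton, and both sides say that `A ≃ (φ → A)` has exactly one element. If `φ` fails, nothing
is added to or glued in `A`, so the unit is bijective, while `φ → A` has exactly one element because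
its domain is empty.
-/

/-- The relation generating the pushout defining the closed modality:
`Sum.inl a` is related to `Sum.inr ⟨h⟩` for every `a : A` and `h : φ`. -/
def ClRel (φ : Prop) (A : Type u) : A ⊕ PLift φ → A ⊕ PLift φ → Prop :=
  fun x y => ∃ (a : A) (h : φ), x = Sum.inl a ∧ y = Sum.inr ⟨h⟩

/-- The closed modality `Cl φ A`, the pushout `A ⊔_{A × φ} φ`. -/
def Cl (φ : Prop) (A : Type u) : Type u := Quot (ClRel φ A)

/-- The unit `η : A → Cl φ A`. -/
def clUnit (φ : Prop) (A : Type u) : A → Cl φ A := fun a => Quot.mk _ (Sum.inl a)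

/-- When `φ` holds, the closed modality collapses every type to a point. -/
theorem cl_eq_of_true {φ : Prop} {A : Type u} (h : φ) (x : Cl φ A) :
    x = Quot.mk _ (Sum.inr ⟨h⟩) := by
  induction x using Quot.ind with
  | mk x =>
    rcases x with a | _
    · exact Quot.sound ⟨a, h, rfl, rfl⟩
    · rfl

/-- When `φ` fails, the closed modality leaves every type unchanged. -/
theorem clUnit_bijective_of_false {φ : Prop} {A : Type u} (h : ¬φ) :
    Function.Bijective (clUnit φ A) := by
  refine Function.bijective_iff_has_inverse.mpr
    ⟨Quot.lift (Sum.elim id fun p => absurd p.down h) ?_, fun _ => rfl, fun x => ?_⟩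
  · rintro _ _ ⟨_, h', _, _⟩
    exact absurd h' h
  · induction x using Quot.ind with
    | mk x =>
      rcases x with _ | p
      · rfl
      · exact absurd p.down h

/-- the unit `A → Cl φ A` is bijective (`A` is `Cl_φ`-modal) iff
`φ → A` has exactly one element (`A` is `Op_φ`-connected). -/
theorem cl_modal_iff_op_connected (φ : Prop) (A : Type u) :
    Function.Bijective (clUnit φ A) ↔ (Nonempty (φ → A) ∧ Subsingleton (φ → A)) := by
  by_cases h : φ
  · constructor
    · rintro ⟨hinj, hsurj⟩
      obtain ⟨a, _⟩ := hsurj (Quot.mk _ (Sum.inr ⟨h⟩))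
      exact ⟨⟨fun _ => a⟩, ⟨fun f g => funext fun p =>
        hinj ((cl_eq_of_true h _).trans (cl_eq_of_true h _).symm)⟩⟩
    · rintro ⟨⟨f⟩, hsub⟩
      refine ⟨fun a b _ => ?_, fun x => ⟨f h, ?_⟩⟩
      · exact congrFun (hsub.elim (fun _ => a) (fun _ => b)) h
      · exact (cl_eq_of_true h _).trans (cl_eq_of_true h x).symm
  · exact iff_of_true (clUnit_bijective_of_false h)
      ⟨⟨fun p => absurd p h⟩, ⟨fun _ _ => funext fun p => absurd p h⟩⟩
end

section
/- Let C and D be small categories and let F : (Cᵒᵖ ⥤ Type u) ⥤ (Dᵒᵖ ⥤ Type u) be a functor preserving all small limits. Then there exists a small category E such that the Artin gluing of F — the comma category Comma (𝟭 (Dᵒᵖ ⥤ Type u)) F, whose objects are triples (d, c, f : d ⟶ F.obj c) — is equivalent to the presheaf category Eᵒᵖ ⥤ Type u. (Presheaf topoi are stable under gluing along a continuous functor; this is the content of the lemma that the logos of parametricity structures Sh(𝕏) is a category of presheaves.) -/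
open CategoryTheory

/-!
A limit-preserving functor `F` between presheaf categories has a left adjoint `L`, by the special
adjoint functor theorem (`isRightAdjoint_of_preservesLimits`). Hence `F` is the nerve
`A ↦ (d ↦ (P d ⟶ A))` of the profunctor `P = L ∘ y` (`isoNerve`), and a map `B ⟶ F A` amounts to
maps `B d → A c`, natural in `c` and `d`, indexed by the elements of `P d c`. An object of the
gluing is therefore the same thing as a presheaf on the collage of `P`, the category obtained
from the disjoint union of `C` and `D` by adding the elements of `P d c` as morphisms from `c`
to `d`. The equivalence is `Collage.toGluing`; its quasi-inverse on objects is `Collage.glue`.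
-/

namespace ArtinGluing

open Limits Opposite

section AdjointFunctor

variable {C : Type u} [SmallCategory C]

lemma isSeparating_yoneda :
    (ObjectProperty.ofObj (fun c : C => yoneda.obj c)).IsSeparating := by
  intro X Y f g h
  ext c x
  have := h _ (ObjectProperty.ofObj_apply _ c.unop) (yonedaEquiv.symm x)
  rw [yonedaEquiv_symm_naturality_right, yonedaEquiv_symm_naturality_right] at this
  exact yonedaEquiv.symm.injective this

/-- The cofree presheaf at `c` on the two-element set of truth values: it sends `c'` to the
predicates on `c ⟶ c'`, and maps `X ⟶ cofree c` correspond to predicates on `X.obj (op c)`. -/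
def cofree (c : C) : Cᵒᵖ ⥤ Type u where
  obj Y := (c ⟶ Y.unop) → ULift.{u} Prop
  map f := ↾fun φ g => φ (g ≫ f.unop)

/-- The map into `cofree c` classifying a predicate on the sections over `c`. -/
def toCofree {X : Cᵒᵖ ⥤ Type u} (c : C) (χ : X.obj (op c) → Prop) : X ⟶ cofree c where
  app Y := ↾fun x g => ⟨χ (X.map g.op x)⟩
  naturality Y Z f := by
    ext x
    funext g
    simp [cofree]

lemma isCoseparating_cofree :
    (ObjectProperty.ofObj (fun c : C => cofree c)).IsCoseparating := by
  intro X Y f g h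
  ext c x
  have h1 := h _ (ObjectProperty.ofObj_apply _ c.unop)
    (toCofree c.unop (fun y => y = g.app c x))
  have h2 := congrFun (congrArg (fun k => k.app c x) h1) (𝟙 _)
  have h3 : (Y.map (𝟙 c) (f.app c x) = g.app c x) = (Y.map (𝟙 c) (g.app c x) = g.app c x) :=
    congrArg ULift.down h2
  simpa using h3

/-- The special adjoint functor theorem for presheaf categories: these are complete,
well-powered since representables detect isomorphisms, and coseparated by `cofree`. -/
lemma isRightAdjoint_of_preservesLimits {ℬ : Type*} [Category.{u} ℬ]
    (F : (Cᵒᵖ ⥤ Type u) ⥤ ℬ) [PreservesLimits F] : F.IsRightAdjoint := by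
  have : WellPowered.{u} (Cᵒᵖ ⥤ Type u) :=
    wellPowered_of_isDetecting (isSeparating_yoneda (C := C)).isDetecting
  exact isRightAdjoint_of_preservesLimits_of_isCoseparating isCoseparating_cofree F

end AdjointFunctor

variable {C D : Type u} [SmallCategory C] [SmallCategory D]

/-- The functor `A ↦ (d ↦ (P.obj d ⟶ A))` induced by a profunctor `P`. -/
abbrev nerve (P : D ⥤ Cᵒᵖ ⥤ Type u) : (Cᵒᵖ ⥤ Type u) ⥤ (Dᵒᵖ ⥤ Type u) :=
  yoneda ⋙ (Functor.whiskeringLeft _ _ _).obj P.op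

/-- By the Yoneda lemma, `F A d ≃ (y d ⟶ F A) ≃ (L (y d) ⟶ A)` for `L` left adjoint to `F`. -/
def isoNerve {F : (Cᵒᵖ ⥤ Type u) ⥤ (Dᵒᵖ ⥤ Type u)} {L : (Dᵒᵖ ⥤ Type u) ⥤ (Cᵒᵖ ⥤ Type u)}
    (adj : L ⊣ F) : F ≅ nerve (yoneda ⋙ L) :=
  NatIso.ofComponents
    (fun A => NatIso.ofComponents
      (fun d => (yonedaEquiv.symm.trans (adj.homEquiv (yoneda.obj d.unop) A).symm).toIso)
      (fun {d d'} f => by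
        ext x
        change (adj.homEquiv _ _).symm (yonedaEquiv.symm ((F.obj A).map f x)) =
          L.map (yoneda.map f.unop) ≫ (adj.homEquiv _ _).symm (yonedaEquiv.symm x)
        rw [← Adjunction.homEquiv_naturality_left_symm, yonedaEquiv_symm_naturality_left]
        rfl))
    (fun {A A'} g => by
      ext d x
      change (adj.homEquiv _ _).symm (yonedaEquiv.symm ((F.map g).app d x)) =
          (adj.homEquiv _ _).symm (yonedaEquiv.symm x) ≫ g
      rw [← Adjunction.homEquiv_naturality_right_symm, yonedaEquiv_symm_naturality_right])

/-- The objects of the collage of `P`: the disjoint union of those of `C` and `D`. -/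
inductive Collage (P : D ⥤ Cᵒᵖ ⥤ Type u) : Type u
  | base (c : C) : Collage P
  | apex (d : D) : Collage P

namespace Collage

variable {P : D ⥤ Cᵒᵖ ⥤ Type u}

/-- `C` and `D` are full subcategories of the collage; a morphism from `c` to `d` is an element
of the profunctor, and there is none from `d` to `c`. -/
def Hom : Collage P → Collage P → Type u
  | base c, base c' => c ⟶ c'
  | base c, apex d => (P.obj d).obj (op c)
  | apex _, base _ => PEmpty
  | apex d, apex d' => d ⟶ d'

/-- Identities are those of `C` and `D`. -/
def id : ∀ x : Collage P, Hom x x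
  | base c => 𝟙 c
  | apex d => 𝟙 d

/-- Composition is that of `C` and `D` and the two actions on the profunctor. -/
def comp : ∀ {x y z : Collage P}, Hom x y → Hom y z → Hom x z
  | base _, base _, base _, f, g => (show _ ⟶ _ from f) ≫ g
  | base _, base _, apex d, f, g => (P.obj d).map (Quiver.Hom.op f) g
  | base c, apex _, apex _, f, g => (P.map g).app (op c) f
  | apex _, apex _, apex _, f, g => (show _ ⟶ _ from f) ≫ g

instance : SmallCategory (Collage P) where
  Hom := Hom
  id := id
  comp := comp
  id_comp {x y} f := match x, y, f with
    | base _, base _, f => Category.id_comp (obj := C) f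
    | base c, apex d, p => Functor.map_id_apply (P.obj d) (op c) p
    | apex _, apex _, f => Category.id_comp (obj := D) f
  comp_id {x y} f := match x, y, f with
    | base _, base _, f => Category.comp_id (obj := C) f
    | base c, apex d, p => Functor.map_id_apply (P ⋙ (evaluation _ _).obj (op c)) d p
    | apex _, apex _, f => Category.comp_id (obj := D) f
  assoc {x y z w} f g h := match x, y, z, w, f, g, h with
    | base _, base _, base _, base _, f, g, h => Category.assoc (obj := C) f g h
    | base _, base _, base _, apex d, f, g, h =>
      Functor.map_comp_apply (P.obj d) (Quiver.Hom.op (V := C) g) (Quiver.Hom.op f) h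
    | base _, base _, apex _, apex _, f, g, h =>
      NatTrans.naturality_apply (P.map h) (Quiver.Hom.op (V := C) f) g
    | base c, apex d, apex d', apex _, p, g, h =>
      (Functor.map_comp_apply (P ⋙ (evaluation _ _).obj (op c)) (show d ⟶ d' from g) h p).symm
    | apex _, apex _, apex _, apex _, f, g, h => Category.assoc (obj := D) f g h

variable (P) in
/-- The inclusion of `C` in the collage. -/
def inBase : C ⥤ Collage P where
  obj := base
  map f := f

variable (P) in
/-- The inclusion of `D` in the collage. -/
def inApex : D ⥤ Collage P where
  obj := apex
  map f := f

/-- An element of the profunctor, as a morphism of the collage. -/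
def edge {c : C} {d : D} (p : (P.obj d).obj (op c)) :
    (inBase P).obj c ⟶ (inApex P).obj d := p

lemma map_comp_edge {c c' : C} {d : D} (f : c' ⟶ c) (p : (P.obj d).obj (op c)) :
    (inBase P).map f ≫ edge p = edge ((P.obj d).map f.op p) := rfl

lemma edge_comp_map {c : C} {d d' : D} (p : (P.obj d).obj (op c)) (g : d ⟶ d') :
    edge p ≫ (inApex P).map g = edge ((P.map g).app (op c) p) := rfl

/-- Restriction of a presheaf on the collage along the two inclusions, with the gluing map
sending a section `b` over `d` to the family of its restrictions along the elements of `P d`. -/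
def toGluing : ((Collage P)ᵒᵖ ⥤ Type u) ⥤ Comma (𝟭 (Dᵒᵖ ⥤ Type u)) (nerve P) where
  obj Y :=
    { left := (inApex P).op ⋙ Y
      right := (inBase P).op ⋙ Y
      hom :=
        { app d := ↾fun b =>
            { app c := ↾fun p => Y.map (edge (c := c.unop) (d := d.unop) p).op b
              naturality c c' f := by
                ext p
                change Y.map (edge ((P.obj d.unop).map f p)).op b =
                  Y.map ((inBase P).map f.unop).op (Y.map (edge p).op b)
                rw [← Functor.map_comp_apply, ← op_comp, map_comp_edge]
                rfl }
          naturality d d' g := by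
            ext b
            apply NatTrans.ext
            funext c
            ext p
            change Y.map (edge p).op (Y.map ((inApex P).map g.unop).op b) =
              Y.map (edge ((P.map g.unop).app c p)).op b
            rw [← Functor.map_comp_apply, ← op_comp, edge_comp_map] } }
  map φ :=
    { left := Functor.whiskerLeft _ φ
      right := Functor.whiskerLeft _ φ
      w := by
        ext d b
        apply NatTrans.ext
        funext c
        ext p
        exact (NatTrans.naturality_apply φ _ b).symm }

instance : (toGluing (P := P)).Faithful where
  map_injective {Y Z φ ψ} h := by
    ext x : 2
    obtain ⟨c | d⟩ := x
    · exact congrArg (fun k => k.right.app (op c)) h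
    · exact congrArg (fun k => k.left.app (op d)) h

instance : (toGluing (P := P)).Full where
  map_surjective {Y Z} k := by
    refine ⟨{ app := fun
                | ⟨base c⟩ => k.right.app (op c)
                | ⟨apex d⟩ => k.left.app (op d)
              naturality := ?_ }, rfl⟩
    rintro ⟨c | d⟩ ⟨c' | d'⟩ ⟨f⟩
    · exact k.right.naturality (Quiver.Hom.op f)
    · exact PEmpty.elim f
    · ext b
      have h := congrArg (fun m => (m.app (op d) b).app (op c') f) k.w
      exact h.symm
    · exact k.left.naturality (Quiver.Hom.op f)

/-- The sections of the presheaf on the collage glued from `X`. -/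
def sections (X : Comma (𝟭 (Dᵒᵖ ⥤ Type u)) (nerve P)) : Collage P → Type u
  | base c => X.right.obj (op c)
  | apex d => X.left.obj (op d)

/-- The restriction maps of the presheaf on the collage glued from `X`: those along an element of
`P d` evaluate the gluing map at it. -/
def restrict (X : Comma (𝟭 (Dᵒᵖ ⥤ Type u)) (nerve P)) :
    ∀ {x y : Collage P}, (x ⟶ y) → (sections X y ⟶ sections X x)
  | base _, base _, f => X.right.map (Quiver.Hom.op f)
  | base c, apex d, p => ↾fun b => (X.hom.app (op d) b).app (op c) p
  | apex _, apex _, g => X.left.map (Quiver.Hom.op g)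

/-- The presheaf on the collage glued from an object of the gluing. -/
def glue (X : Comma (𝟭 (Dᵒᵖ ⥤ Type u)) (nerve P)) : (Collage P)ᵒᵖ ⥤ Type u where
  obj x := sections X x.unop
  map f := restrict X f.unop
  map_id := by
    rintro ⟨c | d⟩
    · exact X.right.map_id (op c)
    · exact X.left.map_id (op d)
  map_comp := by
    rintro ⟨x⟩ ⟨y⟩ ⟨z⟩ ⟨f⟩ ⟨g⟩
    exact match z, y, x, g, f with
    | base _, base _, base _, g, f => X.right.map_comp (Quiver.Hom.op f) (Quiver.Hom.op g)
    | base c, base c', apex d, g, p => by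
      ext b
      exact NatTrans.naturality_apply (X.hom.app (op d) b) (Quiver.Hom.op (V := C) g) p
    | base c, apex d, apex d', p, g => by
      ext b
      have h := NatTrans.naturality_apply X.hom (Quiver.Hom.op (V := D) g) b
      exact (congrArg (fun m => m.app (op c) p) h).symm
    | apex _, apex _, apex _, g, f => X.left.map_comp (Quiver.Hom.op f) (Quiver.Hom.op g)

instance : (toGluing (P := P)).EssSurj where
  mem_essImage X := ⟨glue X, ⟨Comma.isoMk
    (NatIso.ofComponents (fun _ => Iso.refl _) (fun _ => rfl))
    (NatIso.ofComponents (fun _ => Iso.refl _) (fun _ => rfl)) rfl⟩⟩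

instance : (toGluing (P := P)).IsEquivalence where

end Collage

end ArtinGluing

theorem artin_gluing_of_presheaf_topoi_is_presheaf_topos
    (C D : Type u) [SmallCategory C] [SmallCategory D]
    (F : (Cᵒᵖ ⥤ Type u) ⥤ (Dᵒᵖ ⥤ Type u)) [Limits.PreservesLimits F] :
    ∃ E : Cat.{u, u},
      Nonempty (Comma (𝟭 (Dᵒᵖ ⥤ Type u)) F ≌ (Eᵒᵖ ⥤ Type u)) := by
  have := ArtinGluing.isRightAdjoint_of_preservesLimits F
  let adj := Adjunction.ofIsRightAdjoint F
  exact ⟨Cat.of (ArtinGluing.Collage (yoneda ⋙ F.leftAdjoint)),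
    ⟨(Comma.mapRightIso _ (ArtinGluing.isoNerve adj)).trans
      ArtinGluing.Collage.toGluing.asEquivalence.symm⟩⟩
end

section
/- Representation independence for queues (observable-trace form): for every list of commands cs : List Cmd, the list of observations produced by running cs on the one-list queue implementation starting from emp₀ equals the list of observations produced by running cs on the two-list queue implementation starting from emp₁; that is, trace₀ cs = trace₁ cs. -/
/-! Two implementations of a boolean queue and their observable traces. -/

/-- One-list implementation: empty queue. -/
def emp₀ : List Bool := []

/-- One-list implementation: insert (newest element first). -/
def ins₀ (b : Bool) (q : List Bool) : List Bool := b :: q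

/-- One-list implementation: remove the oldest element. -/
def rem₀ (q : List Bool) : Option (Bool × List Bool) :=
  match q.reverse with
  | [] => none
  | x :: xs => some (x, xs.reverse)

/-- Two-list implementation: empty queue. -/
def emp₁ : List Bool × List Bool := ([], [])

/-- Two-list implementation: insert onto the rear list. -/
def ins₁ (b : Bool) (p : List Bool × List Bool) : List Bool × List Bool :=
  (p.1, b :: p.2)

/-- Two-list implementation: remove from the front list, reversing the rear if needed. -/
def rem₁ (p : List Bool × List Bool) : Option (Bool × (List Bool × List Bool)) :=
  match p.1 with
  | x :: fs' => some (x, (fs', p.2))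
  | [] =>
    match p.2.reverse with
    | [] => none
    | x :: rs' => some (x, (rs', []))

/-- Queue commands: insert a boolean, or remove. -/
inductive Cmd where
  | ins (b : Bool)
  | rem

/-- Run a list of commands on the one-list implementation, collecting observations. -/
def run₀ : List Bool → List Cmd → List (Option Bool)
  | _, [] => []
  | q, Cmd.ins b :: cs => run₀ (ins₀ b q) cs
  | q, Cmd.rem :: cs =>
    match rem₀ q with
    | none => none :: run₀ emp₀ cs
    | some (b, q') => some b :: run₀ q' cs

/-- Run a list of commands on the two-list implementation, collecting observations. -/
def run₁ : List Bool × List Bool → List Cmd → List (Option Bool)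
  | _, [] => []
  | p, Cmd.ins b :: cs => run₁ (ins₁ b p) cs
  | p, Cmd.rem :: cs =>
    match rem₁ p with
    | none => none :: run₁ emp₁ cs
    | some (b, p') => some b :: run₁ p' cs

/-- The observable trace of a command list on the one-list queue. -/
def trace₀ (cs : List Cmd) : List (Option Bool) := run₀ emp₀ cs

/-- The observable trace of a command list on the two-list queue. -/
def trace₁ (cs : List Cmd) : List (Option Bool) := run₁ emp₁ cs

/-! The two-list state `(fs, rs)` represents the one-list queue `rs ++ fs.reverse`. This abstraction
function sends `emp₁` to `emp₀` and commutes with insertion (definitionally) and with removal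
(`rem₀_flatten`), so runs from related states produce the same observations (`run₀_flatten`). -/

/-- Abstraction function: the newest-first list of the elements of a two-list queue. -/
def flatten (p : List Bool × List Bool) : List Bool := p.2 ++ p.1.reverse

theorem rem₀_flatten (p : List Bool × List Bool) :
    rem₀ (flatten p) = (rem₁ p).map fun r => (r.1, flatten r.2) := by
  obtain ⟨fs, rs⟩ := p
  cases fs with
  | cons x fs => simp [rem₀, rem₁, flatten]
  | nil => cases h : rs.reverse <;> simp [rem₀, rem₁, flatten, h]

theorem run₀_flatten (cs : List Cmd) (p : List Bool × List Bool) :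
    run₀ (flatten p) cs = run₁ p cs := by
  induction cs generalizing p with
  | nil => rfl
  | cons c cs ih =>
    cases c with
    | ins b => exact ih (ins₁ b p)
    | rem =>
      simp only [run₀, run₁, rem₀_flatten]
      cases rem₁ p with
      | none => exact congrArg (none :: ·) (ih emp₁)
      | some r => exact congrArg (some r.1 :: ·) (ih r.2)

/-- representation independence for queues: the two implementations
produce identical observable traces on every list of commands. -/
theorem queue_representation_independence :
    ∀ cs : List Cmd, trace₀ cs = trace₁ cs := fun cs => run₀_flatten cs emp₁
end
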